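/- (Lemma 2, invariant soundness) Consider a verification methodology M whose proof obligations guarantee, for every heap-update step of every program trace: (a) freshly allocated objects are open; (b) whenever x.closed is set to True, x's class invariant holds in the pre-state; (c) whenever an attribute x.a with a ≠ closed is updated to a value y, every concerned object o satisfies: if o is closed and o's invariant holds in the pre-state heap H, then o's invariant holds in the updated heap H[x.a ↦ y]; (d) class invariants depend neither on the attribute closed nor on the allocation status of objects. Then every heap occurring in a program trace of a program satisfying M's proof obligations satisfies global validity G1: every closed object satisfies its class invariant. -/

import Mathlib

/-!
G1 is an invariant of single steps, so it propagates along the trace by induction. It holds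
initially because the only allocated object, `Void`, is open. Allocation and updates of `closed`
change neither `owner` nor `data`, so by condition (d) no class invariant changes; the only object
that may become closed is covered by rule (b), and a fresh object is open by rule (a). An update of
any other attribute of `x` is handled by rule (c) for the objects with `x` in their read set, and
by framing for all others, since the two heaps agree away from `x`.
-/

/-- A heap records the set of allocated objects (with `Void` allocated) and assigns
to each object a Boolean `closed` flag, an `owner`, and values of other
attributes. -/
structure Heap (Obj Attr Val : Type) where
  alloc : Set Obj
  closed : Obj → Bool
  owner : Obj → Obj
  data : Obj → Attr → Val

namespace Heap

variable {Obj Attr Val : Type}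

/-- Two heaps agree on all attributes of object `o`. -/
def agreeOn (h h' : Heap Obj Attr Val) (o : Obj) : Prop :=
  h.closed o = h'.closed o ∧ h.owner o = h'.owner o ∧ h.data o = h'.data o

end Heap

variable {Obj Attr Val : Type}

/-- Global validity G1: every closed allocated object satisfies its invariant. -/
def G1 (inv : Obj → Heap Obj Attr Val → Prop) (h : Heap Obj Attr Val) : Prop :=
  ∀ o, o ∈ h.alloc → h.closed o = true → inv o h

/-- Allocation of a fresh object `x`, which by rule (a) is open afterwards. -/
def MAllocStep (h h' : Heap Obj Attr Val) : Prop :=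
  ∃ x, x ∉ h.alloc ∧ h'.alloc = h.alloc ∪ {x} ∧
    -- rule (a): freshly allocated objects are open
    h'.closed x = false ∧
    (∀ o, o ≠ x → h'.closed o = h.closed o) ∧
    h'.owner = h.owner ∧ h'.data = h.data

/-- Update `x.closed := b` of one allocated object `x`, changing nothing else;
by rule (b), if `b = true` then `x`'s invariant holds in the pre-state. -/
def MUpdClosedStep (inv : Obj → Heap Obj Attr Val → Prop)
    (h h' : Heap Obj Attr Val) : Prop :=
  ∃ x b, x ∈ h.alloc ∧ h'.alloc = h.alloc ∧
    h'.closed x = b ∧ (∀ o, o ≠ x → h'.closed o = h.closed o) ∧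
    h'.owner = h.owner ∧ h'.data = h.data ∧
    -- rule (b): whenever `x.closed` is set to `true`, `inv x` holds in the pre-state
    (b = true → inv x h)

/-- Update `x.owner := y` of one allocated object `x`, changing nothing else;
by rule (c), every concerned object (an object `o` with `x ∈ Rd o h`) that is
closed and valid in the pre-state remains valid in the post-state. -/
def MUpdOwnerStep (inv : Obj → Heap Obj Attr Val → Prop)
    (Rd : Obj → Heap Obj Attr Val → Set Obj)
    (h h' : Heap Obj Attr Val) : Prop :=
  ∃ x y, x ∈ h.alloc ∧ h'.alloc = h.alloc ∧
    h'.owner x = y ∧ (∀ o, o ≠ x → h'.owner o = h.owner o) ∧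
    h'.closed = h.closed ∧ h'.data = h.data ∧
    -- rule (c)
    (∀ o, x ∈ Rd o h → h.closed o = true ∧ inv o h → inv o h')

/-- Update `x.a := v` of one other attribute `a ≠ closed` of one allocated object
`x`, changing nothing else; by rule (c), every concerned object that is closed and
valid in the pre-state remains valid in the post-state. -/
def MUpdDataStep (inv : Obj → Heap Obj Attr Val → Prop)
    (Rd : Obj → Heap Obj Attr Val → Set Obj)
    (h h' : Heap Obj Attr Val) : Prop :=
  ∃ x a v, x ∈ h.alloc ∧ h'.alloc = h.alloc ∧
    h'.data x a = v ∧ (∀ o b, ¬ (o = x ∧ b = a) → h'.data o b = h.data o b) ∧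
    h'.closed = h.closed ∧ h'.owner = h.owner ∧
    -- rule (c)
    (∀ o, x ∈ Rd o h → h.closed o = true ∧ inv o h → inv o h')

/-- A heap-update step of a program verified under methodology `M`: one instruction
(allocation or a single-attribute update) satisfying `M`'s proof obligations
(a)–(c). -/
def MStep (inv : Obj → Heap Obj Attr Val → Prop)
    (Rd : Obj → Heap Obj Attr Val → Set Obj)
    (h h' : Heap Obj Attr Val) : Prop :=
  MAllocStep h h' ∨ MUpdClosedStep inv h h' ∨ MUpdOwnerStep inv Rd h h' ∨
    MUpdDataStep inv Rd h h'

/-- The common part of the `owner` and `data` updates: a step that keeps `alloc` and `closed` and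
changes attributes of `x` only preserves G1, given rule (c) for the objects concerned with `x`. -/
theorem G1.of_agreeOn_ne {Obj Attr Val : Type}
    {inv : Obj → Heap Obj Attr Val → Prop} {Rd : Obj → Heap Obj Attr Val → Set Obj}
    (hFrame : ∀ o (h h' : Heap Obj Attr Val),
      (∀ p ∈ Rd o h, Heap.agreeOn h h' p) →
        ((inv o h ↔ inv o h') ∧ Rd o h = Rd o h'))
    {h h' : Heap Obj Attr Val} {x : Obj} (hG : G1 inv h)
    (halloc : h'.alloc = h.alloc) (hclosed : h'.closed = h.closed)
    (hagree : ∀ p, p ≠ x → Heap.agreeOn h h' p)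
    (hc : ∀ o, x ∈ Rd o h → h.closed o = true ∧ inv o h → inv o h') : G1 inv h' := by
  intro o ho hcl
  rw [halloc] at ho
  rw [hclosed] at hcl
  have hinv := hG o ho hcl
  by_cases hx : x ∈ Rd o h
  · exact hc o hx ⟨hcl, hinv⟩
  · exact (hFrame o h h' fun p hp => hagree p fun e => hx (e ▸ hp)).1.mp hinv

theorem G1.step {Obj Attr Val : Type}
    {inv : Obj → Heap Obj Attr Val → Prop} {Rd : Obj → Heap Obj Attr Val → Set Obj}
    (hFrame : ∀ o (h h' : Heap Obj Attr Val),
      (∀ p ∈ Rd o h, Heap.agreeOn h h' p) →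
        ((inv o h ↔ inv o h') ∧ Rd o h = Rd o h'))
    (hCondD : ∀ o (h h' : Heap Obj Attr Val),
      h.owner = h'.owner → h.data = h'.data →
        ((inv o h ↔ inv o h') ∧ Rd o h = Rd o h'))
    {h h' : Heap Obj Attr Val} (hG : G1 inv h) (hs : MStep inv Rd h h') : G1 inv h' := by
  rcases hs with ⟨x, -, halloc, hopen, hclosed, howner, hdata⟩ |
    ⟨x, b, -, halloc, hb, hclosed, howner, hdata, hinv⟩ |
    ⟨x, y, -, halloc, -, howner, hclosed, hdata, hc⟩ |
    ⟨x, a, v, -, halloc, -, hdata, hclosed, howner, hc⟩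
  · intro o ho hcl
    have hne : o ≠ x := by
      rintro rfl
      simp [hopen] at hcl
    have ho' : o ∈ h.alloc := by simpa [halloc, hne] using ho
    exact (hCondD o h h' howner.symm hdata.symm).1.mp (hG o ho' (hclosed o hne ▸ hcl))
  · intro o ho hcl
    refine (hCondD o h h' howner.symm hdata.symm).1.mp ?_
    by_cases hne : o = x
    · subst hne
      exact hinv (hb ▸ hcl)
    · exact hG o (halloc ▸ ho) (hclosed o hne ▸ hcl)
  · exact hG.of_agreeOn_ne hFrame halloc hclosed
      (fun p hp => ⟨by rw [hclosed], (howner p hp).symm, by rw [hdata]⟩) hc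
  · exact hG.of_agreeOn_ne hFrame halloc hclosed
      (fun p hp => ⟨by rw [hclosed], by rw [howner],
        funext fun b => (hdata p b fun e => hp e.1).symm⟩) hc

/-- (Lemma 2, invariant soundness) Suppose each object `o` carries an invariant
`inv o` framed by its read set `Rd o`, and class invariants depend neither on the
attribute `closed` nor on the allocation status of objects (condition (d)). Then
every heap occurring in a program trace of a program satisfying methodology `M`'s
proof obligations (a)–(d) satisfies global validity G1: every closed object
satisfies its class invariant. A trace starts in the initial heap, where no object
is allocated except `Void` and `Void` is open, and each consecutive pair of heaps
differs by exactly one heap-update instruction satisfying the obligations. -/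
theorem lemma2_invariant_soundness {Obj Attr Val : Type} (Void : Obj)
    (inv : Obj → Heap Obj Attr Val → Prop)
    (Rd : Obj → Heap Obj Attr Val → Set Obj)
    -- the read set frames the invariant
    (hFrame : ∀ o (h h' : Heap Obj Attr Val),
      (∀ p ∈ Rd o h, Heap.agreeOn h h' p) →
        ((inv o h ↔ inv o h') ∧ Rd o h = Rd o h'))
    -- condition (d): invariants depend neither on `closed` nor on allocation status
    (hCondD : ∀ o (h h' : Heap Obj Attr Val),
      h.owner = h'.owner → h.data = h'.data →
        ((inv o h ↔ inv o h') ∧ Rd o h = Rd o h'))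
    (tr : ℕ → Heap Obj Attr Val) (n : ℕ)
    (hinit_alloc : (tr 0).alloc = {Void})
    (hinit_open : (tr 0).closed Void = false)
    (hstep : ∀ i, i < n → MStep inv Rd (tr i) (tr (i + 1))) :
    ∀ i, i ≤ n → G1 inv (tr i) := by
  intro i
  induction i with
  | zero =>
    intro _ o ho hcl
    rw [hinit_alloc, Set.mem_singleton_iff] at ho
    simp [ho, hinit_open] at hcl
  | succ i ih =>
    intro hi
    exact (ih (by omega)).step hFrame hCondD (hstep i hi)
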